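/- For every α ∈ (0,2), ρ_α(t₀(α)) = −sin(2π/(α+2)) · ∫₀^1 √(1−ξ^α) dξ, and in particular ρ_α(t₀(α)) < 0. -/

import Mathlib

open MeasureTheory Set

/-- `t₀(α) = 2πα/(α+2)`. -/
noncomputable def t0 (α : ℝ) : ℝ := 2 * Real.pi * α / (α + 2)

/-- `Z₀(θ) = (sin t₀(α) / sin θ)^(1/α)`. -/
noncomputable def Z0 (α θ : ℝ) : ℝ := (Real.sin (t0 α) / Real.sin θ) ^ (1 / α)

theorem t0_pos {α : ℝ} (hα0 : 0 < α) : 0 < t0 α := by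
  unfold t0
  positivity

theorem t0_lt_pi {α : ℝ} (hα0 : 0 < α) (hα2 : α < 2) : t0 α < Real.pi := by
  unfold t0
  rw [div_lt_iff₀ (by linarith)]
  nlinarith [Real.pi_pos]

theorem t0_lt_pi_mul {α : ℝ} (hα0 : 0 < α) : t0 α < Real.pi * α := by
  unfold t0
  rw [div_lt_iff₀ (by linarith)]
  nlinarith [mul_pos (mul_pos Real.pi_pos hα0) hα0]

theorem t0_div_self {α : ℝ} (hα0 : 0 < α) : t0 α / α = 2 * Real.pi / (α + 2) := by
  unfold t0
  field_simp

theorem sin_t0_half {α : ℝ} (hα0 : 0 < α) :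
    Real.sin (t0 α / 2) = Real.sin (2 * Real.pi / (α + 2)) := by
  rw [← Real.sin_pi_sub (2 * Real.pi / (α + 2))]
  congr 1
  unfold t0
  field_simp
  ring

theorem Z0_t0 {α : ℝ} (hα0 : 0 < α) (hα2 : α < 2) : Z0 α (t0 α) = 1 := by
  unfold Z0
  rw [div_self (Real.sin_pos_of_pos_of_lt_pi (t0_pos hα0) (t0_lt_pi hα0 hα2)).ne',
    Real.one_rpow]

theorem continuous_sqrt_one_sub_rpow {α : ℝ} (hα0 : 0 < α) :
    Continuous fun t : ℝ => Real.sqrt (1 - t ^ α) :=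
  Real.continuous_sqrt.comp (continuous_const.sub (Real.continuous_rpow_const hα0.le))

theorem integral_sqrt_one_sub_rpow_pos {α : ℝ} (hα0 : 0 < α) :
    0 < ∫ ξ in (0 : ℝ)..1, Real.sqrt (1 - ξ ^ α) := by
  refine intervalIntegral.intervalIntegral_pos_of_pos_on
    ((continuous_sqrt_one_sub_rpow hα0).intervalIntegrable _ _) (fun x hx => ?_) one_pos
  exact Real.sqrt_pos.2 (sub_pos.2 (Real.rpow_lt_one hx.1.le hx.2 hα0))

theorem neg_I_mul_exp_I_mul_re (x : ℝ) :
    (-Complex.I * Complex.exp (Complex.I * (x : ℂ))).re = Real.sin x := by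
  rw [mul_comm Complex.I (x : ℂ), Complex.exp_mul_I, ← Complex.ofReal_cos, ← Complex.ofReal_sin]
  simp [Real.sin]

/-- for every `α ∈ (0,2)`,
`ρ_α(t₀(α)) = −sin(2π/(α+2)) · ∫₀¹ √(1−ξ^α) dξ < 0`. -/
theorem stmt17 (α : ℝ) (hα0 : 0 < α) (hα2 : α < 2) (ρ : ℝ → ℝ)
    (hρ : ∀ θ ∈ Set.Ico (t0 α) (min Real.pi (Real.pi * α)), ∀ g : ℝ → ℂ,
      ContinuousOn g (Set.Icc 0 (Z0 α θ)) →
      (∀ t ∈ Set.Icc (0 : ℝ) (Z0 α θ),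
        g t ^ 2 = Complex.exp (Complex.I * (θ : ℂ)) * ((t ^ α : ℝ) : ℂ)
          - Complex.exp (Complex.I * ((t0 α : ℝ) : ℂ))) →
      g 0 = -Complex.I * Complex.exp (Complex.I * ((t0 α / 2 : ℝ) : ℂ)) →
      ρ θ = (∫ t in (0 : ℝ)..(Z0 α θ), g t).re
        - 2 * Real.sin (θ / α) * ∫ ξ in (0 : ℝ)..1, Real.sqrt (1 - ξ ^ α)) :
    ρ (t0 α) = -Real.sin (2 * Real.pi / (α + 2)) * ∫ ξ in (0 : ℝ)..1, Real.sqrt (1 - ξ ^ α) ∧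
    ρ (t0 α) < 0 := by
  have hρ0 := hρ (t0 α) ⟨le_rfl, lt_min (t0_lt_pi hα0 hα2) (t0_lt_pi_mul hα0)⟩
    (fun t => -Complex.I * Complex.exp (Complex.I * ((t0 α / 2 : ℝ) : ℂ)) *
      ((Real.sqrt (1 - t ^ α) : ℝ) : ℂ))
    (continuous_const.mul
      (Complex.continuous_ofReal.comp (continuous_sqrt_one_sub_rpow hα0))).continuousOn
    (by
      intro t ht
      rw [Z0_t0 hα0 hα2] at ht
      have hexp : Complex.exp (Complex.I * ((t0 α / 2 : ℝ) : ℂ)) ^ 2 =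
          Complex.exp (Complex.I * ((t0 α : ℝ) : ℂ)) := by
        rw [← Complex.exp_nat_mul]
        congr 1
        push_cast
        ring
      have hsqrt : ((Real.sqrt (1 - t ^ α) : ℝ) : ℂ) ^ 2 = 1 - ((t ^ α : ℝ) : ℂ) := by
        rw [← Complex.ofReal_pow,
          Real.sq_sqrt (sub_nonneg.2 (Real.rpow_le_one ht.1 ht.2 hα0.le))]
        push_cast
        rfl
      rw [mul_pow, mul_pow, hexp, hsqrt, neg_sq, Complex.I_sq]
      ring)
    (by simp [Real.zero_rpow hα0.ne'])
  rw [Z0_t0 hα0 hα2, intervalIntegral.integral_const_mul, intervalIntegral.integral_ofReal,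
    Complex.re_mul_ofReal, neg_I_mul_exp_I_mul_re, t0_div_self hα0, sin_t0_half hα0] at hρ0
  have heq : ρ (t0 α) =
      -Real.sin (2 * Real.pi / (α + 2)) * ∫ ξ in (0 : ℝ)..1, Real.sqrt (1 - ξ ^ α) := by
    rw [hρ0]
    ring
  have hsin : 0 < Real.sin (2 * Real.pi / (α + 2)) := by
    rw [← sin_t0_half hα0]
    have h0 := t0_pos hα0
    have hπ := t0_lt_pi hα0 hα2
    exact Real.sin_pos_of_pos_of_lt_pi (by linarith) (by linarith)
  refine ⟨heq, ?_⟩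
  rw [heq, neg_mul]
  exact neg_neg_of_pos (mul_pos hsin (integral_sqrt_one_sub_rpow_pos hα0))
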